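/- Let R be a commutative ring and M a flat Mittag-Leffler R-module. Then the external direct sum M ⊕ R^{(ℕ)} of M with a countably generated free module is admissibly Ind-projective. (Proposition B.2 of the appendix by Štovíček and Trlifaj.) -/

import Mathlib

universe u

open TensorProduct DirectSum

/-- The canonical map `M ⊗[R] (∏ i, Q i) →ₗ[R] ∏ i, (M ⊗[R] Q i)`,
determined by `m ⊗ (q_i)_i ↦ (m ⊗ q_i)_i`. -/
noncomputable def tensorPiMap (R : Type u) [CommRing R] (M : Type u) [AddCommGroup M]
    [Module R M] {ι : Type u} (Q : ι → Type u) [∀ i, AddCommGroup (Q i)]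
    [∀ i, Module R (Q i)] :
    (M ⊗[R] (∀ i, Q i)) →ₗ[R] ∀ i, M ⊗[R] Q i :=
  LinearMap.pi fun i => LinearMap.lTensor M (LinearMap.proj i)

/-- An `R`-module `M` is Mittag-Leffler if for every family `(Q i)` of `R`-modules the
canonical map `M ⊗[R] (∏ i, Q i) → ∏ i, (M ⊗[R] Q i)` is injective. -/
def IsMittagLeffler (R : Type u) [CommRing R] (M : Type u) [AddCommGroup M]
    [Module R M] : Prop :=
  ∀ (ι : Type u) (Q : ι → Type u) [∀ i, AddCommGroup (Q i)] [∀ i, Module R (Q i)],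
    Function.Injective (tensorPiMap R M Q)

/-- An `R`-module is flat Mittag-Leffler if it is flat and Mittag-Leffler. -/
def IsFlatMittagLeffler (R : Type u) [CommRing R] (M : Type u) [AddCommGroup M]
    [Module R M] : Prop :=
  Module.Flat R M ∧ IsMittagLeffler R M


/-- A presentation of `M` as an admissible Ind-object of the category of finitely
generated projective `R`-modules: a directed poset `I` and a monotone family of
submodules `P i ⊆ M` with union `M`, each finitely generated projective, such that
each inclusion `P i ⊆ P j` (for `i ≤ j`) admits an `R`-linear retraction. -/
structure AdmissibleIndPresentation (R : Type u) [Ring R] (M : Type u) [AddCommGroup M]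
    [Module R M] : Type (u + 1) where
  I : Type u
  [ord : PartialOrder I]
  directed : IsDirected I (· ≤ ·)
  P : I → Submodule R M
  mono : Monotone P
  covers : ∀ x : M, ∃ i, x ∈ P i
  fg : ∀ i, (P i).FG
  proj : ∀ i, Module.Projective R (P i)
  splits : ∀ i j, (h : i ≤ j) →
    ∃ r : (P j) →ₗ[R] (P i), ∀ v : P i, r (Submodule.inclusion (mono h) v) = v

/-- `M` is admissibly Ind-projective if it admits a presentation as an admissible
Ind-object of finitely generated projective modules. -/
def IsAdmissiblyIndProjective (R : Type u) [Ring R] (M : Type u) [AddCommGroup M]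
    [Module R M] : Prop :=
  Nonempty (AdmissibleIndPresentation R M)

/-!
A linear map `f` from a finitely generated free module to a flat Mittag-Leffler module `M` factors
as `f = y ∘ a` through some `R^k` in such a way that `Q ⊗ f` and `Q ⊗ a` have the same kernel for
every module `Q`. Treating `y` in the same way gives `c : R^k → R^l` with the kernels of `Q ⊗ y`;
then every `Q ⊗ (c ∘ a)` has the kernel of `Q ⊗ a`, and duality produces `s` with `s ∘ c ∘ a = a`.
Hence `(y, 1 - s ∘ c) : R^k → M × R^k` is universally injective, and it maps `a v` to `(f v, 0)`.
A free module of infinite rank has room both for the extra factor `R^k` and for a given finitely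
generated submodule, so every finitely generated submodule of `M ⊕ R^{(ℕ)}` lies in a finitely
generated projective pure submodule. These submodules form a directed system, and duality splits
their inclusions.
-/

section Tensor

variable {R : Type*} [CommSemiring R] {F N : Type*} [AddCommMonoid F] [Module R F]
  [AddCommMonoid N] [Module R N]

theorem lTensor_rTensor_apply {Q Q' : Type*} [AddCommMonoid Q] [Module R Q] [AddCommMonoid Q']
    [Module R Q'] (f : F →ₗ[R] N) (π : Q →ₗ[R] Q') (t : Q ⊗[R] F) :
    f.lTensor Q' (π.rTensor F t) = π.rTensor N (f.lTensor Q t) := by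
  rw [← LinearMap.comp_apply, LinearMap.lTensor_comp_rTensor, ← LinearMap.rTensor_comp_lTensor,
    LinearMap.comp_apply]

theorem dualTensorHom_lTensor_apply {P : Type*} [AddCommMonoid P] [Module R P] (f : N →ₗ[R] P)
    (t : Module.Dual R F ⊗[R] N) :
    dualTensorHom R F P (f.lTensor _ t) = f ∘ₗ dualTensorHom R F N t :=
  LinearMap.congr_fun (dualTensorHom_comp_lTensor f) t

theorem dualTensorHom_rTensor_dualMap_apply {P : Type*} [AddCommMonoid P] [Module R P]
    (f : F →ₗ[R] N) (t : Module.Dual R N ⊗[R] P) :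
    dualTensorHom R F P (f.dualMap.rTensor P t) = dualTensorHom R N P t ∘ₗ f :=
  LinearMap.congr_fun (dualTensorHom_comp_rTensor_dualMap f) t

theorem exists_forall_rTensor_proj_eq [Module.Finite R F] {ι : Type*} {Q : ι → Type*}
    [∀ i, AddCommMonoid (Q i)] [∀ i, Module R (Q i)] (t : ∀ i, Q i ⊗[R] F) :
    ∃ T : (∀ i, Q i) ⊗[R] F, ∀ i, (LinearMap.proj i).rTensor F T = t i := by
  obtain ⟨n, p, hp⟩ := Module.Finite.exists_fin' R F
  choose s hs using fun i => LinearMap.lTensor_surjective (Q i) hp (t i)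
  choose c hc using fun i => TensorProduct.eq_repr_basis_right (Pi.basisFun R (Fin n)) (s i)
  refine ⟨∑ j, (fun i => c i j) ⊗ₜ p (Pi.basisFun R (Fin n) j), fun i => ?_⟩
  rw [← hs, ← hc, Finsupp.sum_fintype _ _ (by simp)]
  simp only [map_sum, LinearMap.rTensor_tmul, LinearMap.proj_apply, LinearMap.lTensor_tmul]

end Tensor

section Domination

variable {R : Type u} [CommRing R]
variable {F : Type*} [AddCommGroup F] [Module R F] {N : Type*} [AddCommGroup N] [Module R N]
variable {G : Type*} [AddCommGroup G] [Module R G] {P : Type*} [AddCommGroup P] [Module R P]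

/-- The linear map `f` is dominated by `g`, with the same source, if
`ker (Q ⊗ f) ⊆ ker (Q ⊗ g)` for every module `Q`. It is the part of a
factorization of `g` through `f` that tensor products detect. -/
def IsDominatedBy (f : F →ₗ[R] N) (g : F →ₗ[R] G) : Prop :=
  ∀ (Q : Type u) [AddCommGroup Q] [Module R Q],
    LinearMap.ker (f.lTensor Q) ≤ LinearMap.ker (g.lTensor Q)

/-- A linear map is universally injective (a pure monomorphism) if it stays injective after
tensoring with every module. A submodule is pure when its inclusion is universally injective. -/
def IsUniversallyInjective (f : F →ₗ[R] N) : Prop :=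
  ∀ (Q : Type u) [AddCommGroup Q] [Module R Q], Function.Injective (f.lTensor Q)

theorem isDominatedBy_comp (f : F →ₗ[R] N) (k : N →ₗ[R] P) : IsDominatedBy f (k ∘ₗ f) := by
  intro Q _ _
  rw [LinearMap.lTensor_comp]
  exact LinearMap.ker_le_ker_comp _ _

namespace IsDominatedBy

theorem trans {f : F →ₗ[R] N} {g : F →ₗ[R] G} {h : F →ₗ[R] P}
    (hfg : IsDominatedBy f g) (hgh : IsDominatedBy g h) : IsDominatedBy f h :=
  fun Q _ _ => (hfg Q).trans (hgh Q)

theorem comp_left {f : F →ₗ[R] N} {g : F →ₗ[R] G} (h : IsDominatedBy f g) (k : G →ₗ[R] P) :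
    IsDominatedBy f (k ∘ₗ g) :=
  h.trans (isDominatedBy_comp g k)

theorem of_comp_left {f : F →ₗ[R] N} {k : N →ₗ[R] P} {g : F →ₗ[R] G}
    (h : IsDominatedBy (k ∘ₗ f) g) : IsDominatedBy f g :=
  (isDominatedBy_comp f k).trans h

theorem comp_right {f : F →ₗ[R] N} {g : F →ₗ[R] G} (h : IsDominatedBy f g) (k : P →ₗ[R] F) :
    IsDominatedBy (f ∘ₗ k) (g ∘ₗ k) := by
  intro Q _ _
  rw [LinearMap.lTensor_comp, LinearMap.lTensor_comp, LinearMap.ker_comp, LinearMap.ker_comp]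
  exact Submodule.comap_mono (h Q)

theorem add {f : F →ₗ[R] N} {g g' : F →ₗ[R] G} (h : IsDominatedBy f g)
    (h' : IsDominatedBy f g') : IsDominatedBy f (g + g') := by
  intro Q _ _ t ht
  rw [LinearMap.mem_ker, LinearMap.lTensor_add, LinearMap.add_apply,
    LinearMap.mem_ker.1 (h Q ht), LinearMap.mem_ker.1 (h' Q ht), add_zero]

-- The test module is `Q = F^* / f^*(N^*)`: by duality, `g` lies in the kernel of
-- `F^* ⊗ G → Q ⊗ G` exactly when it is of the form `h ∘ f`.
theorem exists_comp_eq {F : Type u} [AddCommGroup F] [Module R F] [Module.Finite R F]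
    [Module.Projective R F] [Module.Finite R N] [Module.Projective R N]
    {f : F →ₗ[R] N} {g : F →ₗ[R] G} (hfg : IsDominatedBy f g) : ∃ h : N →ₗ[R] G, h ∘ₗ f = g := by
  let π := (LinearMap.range f.dualMap).mkQ
  have exact_π : Function.Exact f.dualMap π := LinearMap.exact_map_mkQ_range f.dualMap
  obtain ⟨idF, hF⟩ := (dualTensorHom_bijective (R := R) (M := F) (N := F)).2 LinearMap.id
  obtain ⟨idN, hN⟩ := (dualTensorHom_bijective (R := R) (M := N) (N := N)).2 LinearMap.id
  have f_idF : f.lTensor _ idF = f.dualMap.rTensor N idN :=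
    dualTensorHom_bijective.1 <| by
      rw [dualTensorHom_lTensor_apply, dualTensorHom_rTensor_dualMap_apply, hF, hN,
        LinearMap.comp_id, LinearMap.id_comp]
  have f_π_idF : f.lTensor _ (π.rTensor F idF) = 0 := by
    rw [lTensor_rTensor_apply, f_idF]
    exact (rTensor_exact N exact_π (Submodule.mkQ_surjective _)).apply_apply_eq_zero idN
  have π_g_idF : π.rTensor G (g.lTensor _ idF) = 0 := by
    rw [← lTensor_rTensor_apply]
    exact hfg _ f_π_idF
  obtain ⟨z, hz⟩ := (rTensor_exact G exact_π (Submodule.mkQ_surjective _) _).1 π_g_idF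
  refine ⟨dualTensorHom R N G z, ?_⟩
  rw [← dualTensorHom_rTensor_dualMap_apply, hz, dualTensorHom_lTensor_apply, hF,
    LinearMap.comp_id]

end IsDominatedBy

theorem isUniversallyInjective_iff_isDominatedBy_id {f : F →ₗ[R] N} :
    IsUniversallyInjective f ↔ IsDominatedBy f LinearMap.id := by
  simp only [IsUniversallyInjective, IsDominatedBy, LinearMap.lTensor_id, LinearMap.ker_id,
    le_bot_iff, LinearMap.ker_eq_bot]

namespace IsUniversallyInjective

theorem injective {f : F →ₗ[R] N} (hf : IsUniversallyInjective f) : Function.Injective f :=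
  (Module.FaithfullyFlat.lTensor_injective_iff_injective R R f).1 (hf R)

theorem comp {g : N →ₗ[R] G} {f : F →ₗ[R] N} (hg : IsUniversallyInjective g)
    (hf : IsUniversallyInjective f) : IsUniversallyInjective (g ∘ₗ f) := by
  intro Q _ _
  rw [LinearMap.lTensor_comp]
  exact (hg Q).comp (hf Q)

theorem of_comp {g : N →ₗ[R] G} {f : F →ₗ[R] N} (h : IsUniversallyInjective (g ∘ₗ f)) :
    IsUniversallyInjective f := by
  intro Q _ _
  have := h Q
  rw [LinearMap.lTensor_comp] at this
  exact Function.Injective.of_comp this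

theorem of_comp_eq_id {r : N →ₗ[R] F} {f : F →ₗ[R] N} (h : r ∘ₗ f = LinearMap.id) :
    IsUniversallyInjective f := by
  refine of_comp (g := r) fun Q _ _ => ?_
  rw [h, LinearMap.lTensor_id]
  exact Function.injective_id

theorem prodMap {f : F →ₗ[R] N} {g : G →ₗ[R] P} (hf : IsUniversallyInjective f)
    (hg : IsUniversallyInjective g) : IsUniversallyInjective (f.prodMap g) := by
  rw [isUniversallyInjective_iff_isDominatedBy_id] at hf hg ⊢
  have fst : IsDominatedBy (f.prodMap g) (LinearMap.fst R F G) :=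
    .of_comp_left (k := LinearMap.fst R N P) (hf.comp_right (LinearMap.fst R F G))
  have snd : IsDominatedBy (f.prodMap g) (LinearMap.snd R F G) :=
    .of_comp_left (k := LinearMap.snd R N P) (hg.comp_right (LinearMap.snd R F G))
  have decomposition : LinearMap.inl R F G ∘ₗ LinearMap.fst R F G +
      LinearMap.inr R F G ∘ₗ LinearMap.snd R F G = LinearMap.id := by
    ext <;> simp
  rw [← decomposition]
  exact (fst.comp_left _).add (snd.comp_left _)

theorem exists_comp_eq_id {F : Type u} [AddCommGroup F] [Module R F] [Module.Finite R F]
    [Module.Projective R F] [Module.Finite R N] [Module.Projective R N]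
    {f : F →ₗ[R] N} (hf : IsUniversallyInjective f) : ∃ r : N →ₗ[R] F, r ∘ₗ f = LinearMap.id :=
  (isUniversallyInjective_iff_isDominatedBy_id.1 hf).exists_comp_eq

end IsUniversallyInjective

theorem IsDominatedBy.isUniversallyInjective_prod {f : F →ₗ[R] N} {g : F →ₗ[R] G}
    (h : IsDominatedBy f g) (s : G →ₗ[R] F) :
    IsUniversallyInjective (f.prod (LinearMap.id - s ∘ₗ g)) := by
  have dom_sg : IsDominatedBy (f.prod (LinearMap.id - s ∘ₗ g)) (s ∘ₗ g) := by
    refine .of_comp_left (k := LinearMap.fst R N F) ?_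
    rw [LinearMap.fst_prod]
    exact h.comp_left s
  have dom_compl : IsDominatedBy (f.prod (LinearMap.id - s ∘ₗ g)) (LinearMap.id - s ∘ₗ g) := by
    refine .of_comp_left (k := LinearMap.snd R N F) ?_
    rw [LinearMap.snd_prod]
    exact fun _ _ _ => le_rfl
  have dom_id := dom_sg.add dom_compl
  rw [add_sub_cancel] at dom_id
  exact isUniversallyInjective_iff_isDominatedBy_id.2 dom_id

end Domination

section MittagLeffler

variable {R : Type u} [CommRing R]

theorem exists_factorization_of_lTensor_eq_zero {F : Type*} [AddCommGroup F]
    [Module R F] [Module.Free R F] [Module.Finite R F] {M : Type*} [AddCommGroup M] [Module R M]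
    [Module.Flat R M] {Q : Type*} [AddCommGroup Q] [Module R Q] {f : F →ₗ[R] M}
    {t : Q ⊗[R] F} (ht : f.lTensor Q t = 0) :
    ∃ (k : ℕ) (a : F →ₗ[R] (Fin k →₀ R)) (y : (Fin k →₀ R) →ₗ[R] M),
      y ∘ₗ a = f ∧ a.lTensor Q t = 0 := by
  let e := Module.Free.chooseBasis R F
  obtain ⟨c, rfl⟩ := TensorProduct.eq_repr_basis_right e t
  rw [Finsupp.sum_fintype _ _ (by simp)] at ht ⊢
  simp only [map_sum, LinearMap.lTensor_tmul] at ht ⊢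
  obtain ⟨k, a, y, hf, ha⟩ :=
    vanishesTrivially_of_sum_tmul_eq_zero_of_rTensor_injective R
      (Module.Flat.rTensor_preserves_injective_linearMap _ (Submodule.injective_subtype _)) ht
  refine ⟨k, e.constr R fun i => Finsupp.equivFunOnFinite.symm (a i),
    Finsupp.linearCombination R y, e.ext fun i => ?_, ?_⟩
  · simp [hf, Finsupp.linearCombination_apply, Finsupp.sum_fintype]
  · apply (finsuppScalarRight R R Q (Fin k)).injective
    ext j
    simpa using ha j

theorem IsMittagLeffler.eq_zero_of_forall_rTensor_proj {M : Type u} [AddCommGroup M] [Module R M]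
    (hM : IsMittagLeffler R M) {ι : Type u} {Q : ι → Type u} [∀ i, AddCommGroup (Q i)]
    [∀ i, Module R (Q i)] {t : (∀ i, Q i) ⊗[R] M}
    (ht : ∀ i, (LinearMap.proj i : (∀ i, Q i) →ₗ[R] Q i).rTensor M t = 0) : t = 0 := by
  rw [← (TensorProduct.comm R _ M).map_eq_zero_iff]
  apply hM ι Q
  rw [map_zero]
  funext i
  change (LinearMap.proj i : (∀ i, Q i) →ₗ[R] Q i).lTensor M (TensorProduct.comm R _ M t) = 0
  rw [LinearMap.lTensor_comm, ht, map_zero]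

variable {M : Type u} [AddCommGroup M] [Module R M]

-- If every factorization `z` failed, witnessed by `t z ∈ Q z ⊗ F`, then the Mittag-Leffler
-- property would kill the image in `(∏ Q z) ⊗ M` of the tensor assembled from all the `t z`, and
-- flatness would yield a single factorization that kills all the `t z`, including its own.
theorem IsFlatMittagLeffler.exists_factorization_isDominatedBy (hM : IsFlatMittagLeffler R M)
    {F : Type u} [AddCommGroup F] [Module R F] [Module.Free R F] [Module.Finite R F]
    (f : F →ₗ[R] M) :
    ∃ (k : ℕ) (a : F →ₗ[R] (Fin k →₀ R)) (y : (Fin k →₀ R) →ₗ[R] M),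
      y ∘ₗ a = f ∧ IsDominatedBy f a := by
  obtain ⟨flat, mittagLeffler⟩ := hM
  by_contra! no_factorization
  let Z := {z : Σ k : ℕ, (F →ₗ[R] (Fin k →₀ R)) × ((Fin k →₀ R) →ₗ[R] M) // z.2.2 ∘ₗ z.2.1 = f}
  have undominated (z : Z) : ∃ (Q : Type u) (_ : AddCommGroup Q) (_ : Module R Q) (t : Q ⊗[R] F),
      f.lTensor Q t = 0 ∧ z.1.2.1.lTensor Q t ≠ 0 := by
    have := no_factorization z.1.1 z.1.2.1 z.1.2.2 z.2
    simp only [IsDominatedBy, SetLike.le_def, LinearMap.mem_ker] at this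
    push Not at this
    exact this
  choose Q _ _ t ht ht' using undominated
  obtain ⟨T, hT⟩ := exists_forall_rTensor_proj_eq t
  have f_T : f.lTensor _ T = 0 := by
    refine mittagLeffler.eq_zero_of_forall_rTensor_proj fun z => ?_
    rw [← lTensor_rTensor_apply, hT, ht]
  obtain ⟨k, a, y, hya, haT⟩ := exists_factorization_of_lTensor_eq_zero f_T
  let z : Z := ⟨⟨k, a, y⟩, hya⟩
  apply ht' z
  rw [← hT, lTensor_rTensor_apply, haT, map_zero]

theorem IsFlatMittagLeffler.exists_isUniversallyInjective_comp_eq_inl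
    (hM : IsFlatMittagLeffler R M) {F : Type u} [AddCommGroup F] [Module R F] [Module.Free R F]
    [Module.Finite R F] (f : F →ₗ[R] M) :
    ∃ (k : ℕ) (p : (Fin k →₀ R) →ₗ[R] M × (Fin k →₀ R)) (a : F →ₗ[R] (Fin k →₀ R)),
      IsUniversallyInjective p ∧ p ∘ₗ a = LinearMap.inl R M (Fin k →₀ R) ∘ₗ f := by
  obtain ⟨k, a, y, rfl, dom_a⟩ := hM.exists_factorization_isDominatedBy f
  obtain ⟨l, c, w, rfl, dom_c⟩ := hM.exists_factorization_isDominatedBy y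
  have dom_ca : IsDominatedBy (c ∘ₗ a) a := (isDominatedBy_comp (c ∘ₗ a) w).trans dom_a
  obtain ⟨s, hs⟩ := dom_ca.exists_comp_eq
  refine ⟨k, (w ∘ₗ c).prod (LinearMap.id - s ∘ₗ c), a, dom_c.isUniversallyInjective_prod s, ?_⟩
  have compl_comp_a : (LinearMap.id - s ∘ₗ c) ∘ₗ a = 0 :=
    LinearMap.ext fun v => sub_eq_zero.2 (LinearMap.congr_fun hs v).symm
  rw [LinearMap.prod_comp, compl_comp_a]
  rfl

end MittagLeffler

section FreeSummand

variable {R : Type*} [Semiring R] {L : Type*} [AddCommMonoid L] [Module R L]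

theorem exists_finset_le_span_basis_image_of_fg {ι : Type*} (b : Module.Basis ι R L)
    {T : Submodule R L} (hT : T.FG) : ∃ s : Finset ι, T ≤ Submodule.span R (b '' s) := by
  classical
  obtain ⟨t, rfl⟩ := hT
  refine ⟨t.biUnion fun x => (b.repr x).support, Submodule.span_le.2 fun x hx => ?_⟩
  refine Submodule.span_mono ?_ (b.mem_span_repr_support x)
  gcongr
  exact Finset.subset_biUnion_of_mem (fun x => (b.repr x).support) hx

theorem exists_leftInverse_le_range_inr_of_fg {ι : Type*} [Infinite ι]
    (b : Module.Basis ι R L) {T : Submodule R L} (hT : T.FG) (k : ℕ) :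
    ∃ (s : Finset ι) (j : (Fin k →₀ R) × (s →₀ R) →ₗ[R] L)
      (r : L →ₗ[R] (Fin k →₀ R) × (s →₀ R)),
      r ∘ₗ j = LinearMap.id ∧ T ≤ LinearMap.range (j ∘ₗ LinearMap.inr R _ _) := by
  obtain ⟨s, hs⟩ := exists_finset_le_span_basis_image_of_fg b hT
  have : Infinite ↑(s : Set ι)ᶜ := s.finite_toSet.infinite_compl.to_subtype
  let fresh : Fin k ↪ ↑(s : Set ι)ᶜ := Fin.valEmbedding.trans (Infinite.natEmbedding _)
  let σ : Fin k ⊕ s → ι := Sum.elim (fun i => fresh i) (↑)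
  have σ_injective : Function.Injective σ :=
    (Subtype.val_injective.comp fresh.injective).sumElim Subtype.val_injective
      fun i i' (h : (fresh i : ι) = i') => (fresh i).2 (h ▸ i'.2)
  let e := Finsupp.sumFinsuppLEquivProdFinsupp R (M := R) (α := Fin k) (β := s)
  let j := b.repr.symm.toLinearMap ∘ₗ Finsupp.lmapDomain R R σ ∘ₗ e.symm.toLinearMap
  let r := e.toLinearMap ∘ₗ Finsupp.lcomapDomain σ σ_injective ∘ₗ b.repr.toLinearMap
  refine ⟨s, j, r, LinearMap.ext fun v => ?_, hs.trans (Submodule.span_le.2 ?_)⟩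
  · simp only [j, r, LinearMap.comp_apply, LinearEquiv.coe_coe, LinearEquiv.apply_symm_apply,
      Finsupp.lmapDomain_apply, LinearMap.id_apply]
    rw [Finsupp.leftInverse_lcomapDomain_mapDomain, LinearEquiv.apply_symm_apply]
  · rintro _ ⟨i, hi, rfl⟩
    refine ⟨Finsupp.single ⟨i, hi⟩ 1, ?_⟩
    simp [j, e, σ]

end FreeSummand

section PureSubmodules

variable {R : Type u} [CommRing R]

/-- The finitely generated projective pure submodules of a module; purity is what makes the
inclusions between them split. -/
structure IsPureFGProjective {N : Type*} [AddCommGroup N] [Module R N] (P : Submodule R N) :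
    Prop where
  fg : P.FG
  projective : Module.Projective R P
  pure : IsUniversallyInjective P.subtype

theorem IsUniversallyInjective.isPureFGProjective_range {N : Type*} [AddCommGroup N] [Module R N]
    {F : Type*} [AddCommGroup F] [Module R F] [Module.Finite R F] [Module.Projective R F]
    {f : F →ₗ[R] N} (hf : IsUniversallyInjective f) : IsPureFGProjective (LinearMap.range f) := by
  let e := LinearEquiv.ofInjective f hf.injective
  have subtype_eq : (LinearMap.range f).subtype = f ∘ₗ e.symm.toLinearMap := by
    ext x
    simp [e]
  refine ⟨Module.Finite.iff_fg.1 inferInstance, .of_equiv' e, ?_⟩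
  rw [subtype_eq]
  exact hf.comp (.of_comp_eq_id e.comp_symm)

variable {N : Type u} [AddCommGroup N] [Module R N]

theorem IsPureFGProjective.exists_leftInverse_inclusion {P P' : Submodule R N}
    (hP : IsPureFGProjective P) (hP' : IsPureFGProjective P') (h : P ≤ P') :
    ∃ r : P' →ₗ[R] P, r ∘ₗ Submodule.inclusion h = LinearMap.id := by
  have := Module.Finite.iff_fg.2 hP.fg
  have := Module.Finite.iff_fg.2 hP'.fg
  have := hP.projective
  have := hP'.projective
  have inclusion_pure : IsUniversallyInjective (Submodule.inclusion h) := by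
    refine .of_comp (g := P'.subtype) ?_
    rw [Submodule.subtype_comp_inclusion]
    exact hP.pure
  exact inclusion_pure.exists_comp_eq_id

theorem isAdmissiblyIndProjective_of_forall_fg_le
    (h : ∀ S : Submodule R N, S.FG → ∃ P, IsPureFGProjective P ∧ S ≤ P) :
    IsAdmissiblyIndProjective R N := by
  refine ⟨{
    I := {P : Submodule R N // IsPureFGProjective P}
    P := Subtype.val
    directed := ⟨fun P P' => ?_⟩
    mono := Subtype.mono_coe _
    covers := fun x => ?_
    fg := fun P => P.2.fg
    proj := fun P => P.2.projective
    splits := fun P P' hPP' => ?_ }⟩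
  · obtain ⟨P'', hP'', hle⟩ := h _ (P.2.fg.sup P'.2.fg)
    exact ⟨⟨P'', hP''⟩, le_sup_left.trans hle, le_sup_right.trans hle⟩
  · obtain ⟨P, hP, hle⟩ := h _ (Submodule.fg_span_singleton x)
    exact ⟨⟨P, hP⟩, hle (Submodule.mem_span_singleton_self x)⟩
  · obtain ⟨r, hr⟩ := P.2.exists_leftInverse_inclusion P'.2 hPP'
    exact ⟨r, LinearMap.congr_fun hr⟩

end PureSubmodules

theorem IsFlatMittagLeffler.exists_isPureFGProjective_le {R : Type u} [CommRing R] {M : Type u}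
    [AddCommGroup M] [Module R M] (hM : IsFlatMittagLeffler R M) {L : Type*} [AddCommGroup L]
    [Module R L] {ι : Type*} [Infinite ι] (b : Module.Basis ι R L) {S : Submodule R (M × L)}
    (hS : S.FG) : ∃ P : Submodule R (M × L), IsPureFGProjective P ∧ S ≤ P := by
  have := Module.Finite.iff_fg.2 hS
  obtain ⟨n, x, x_surjective⟩ := Module.Finite.exists_fin' R S
  obtain ⟨k, p, a, p_pure, hpa⟩ := hM.exists_isUniversallyInjective_comp_eq_inl
    (LinearMap.fst R M L ∘ₗ S.subtype ∘ₗ x)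
  obtain ⟨s, j, r, hrj, hj⟩ :=
    exists_leftInverse_le_range_inr_of_fg b (hS.map (LinearMap.snd R M L)) k
  let B := LinearMap.prodMap LinearMap.id j ∘ₗ
    (LinearEquiv.prodAssoc R M (Fin k →₀ R) (s →₀ R)).toLinearMap ∘ₗ
    p.prodMap LinearMap.id
  have B_pure : IsUniversallyInjective B :=
    (IsUniversallyInjective.prodMap (.of_comp_eq_id (LinearMap.id_comp _))
      (.of_comp_eq_id hrj)).comp <|
    (IsUniversallyInjective.of_comp_eq_id (LinearEquiv.symm_comp _)).comp <|
    p_pure.prodMap (.of_comp_eq_id (LinearMap.id_comp _))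
  refine ⟨LinearMap.range B, B_pure.isPureFGProjective_range, fun v hv => ?_⟩
  obtain ⟨u, hu⟩ := x_surjective ⟨v, hv⟩
  obtain ⟨e, he⟩ := hj (Submodule.mem_map_of_mem hv)
  have p_a_u : p (a u) = (v.1, 0) := by
    simpa [hu] using LinearMap.congr_fun hpa u
  refine ⟨(a u, e), ?_⟩
  simp only [B, LinearMap.comp_apply, LinearMap.prodMap_apply, p_a_u]
  exact Prod.ext rfl he

theorem isAdmissiblyIndProjective_prod_free_of_flatMittagLeffler_general
    (R : Type u) [CommRing R] (M : Type u) [AddCommGroup M] [Module R M]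
    (hM : IsFlatMittagLeffler R M) {L : Type u} [AddCommGroup L] [Module R L] {ι : Type*}
    [Infinite ι] (b : Module.Basis ι R L) :
    IsAdmissiblyIndProjective R (M × L) :=
  isAdmissiblyIndProjective_of_forall_fg_le fun _ hS => hM.exists_isPureFGProjective_le b hS

/-- **Proposition B.2**: if `M` is a flat Mittag-Leffler `R`-module, then
`M ⊕ R^{(ℕ)}` is admissibly Ind-projective. -/
theorem isAdmissiblyIndProjective_prod_free_of_flatMittagLeffler
    (R : Type u) [CommRing R] (M : Type u) [AddCommGroup M] [Module R M]
    (hM : IsFlatMittagLeffler R M) :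
    IsAdmissiblyIndProjective R (M × (ℕ →₀ R)) :=
  isAdmissiblyIndProjective_prod_free_of_flatMittagLeffler_general R M hM Finsupp.basisSingleOne
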